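/- Let n ≥ 1, let β : ℝ^{1+n} → ℂ be continuous with compact support, and let ω ∈ ℝⁿ be a unit vector. If ∫_{ℝ^{1+n}} β(t,x) φ(x + tω)² dx dt = 0 for every smooth compactly supported φ : ℝⁿ → ℝ, then ∫_ℝ β(t, y − tω) dt = 0 for every y ∈ ℝⁿ. -/

import Mathlib

open MeasureTheory
open scoped RealInnerProductSpace

theorem light_ray_aux {E : Type*} [NormedAddCommGroup E] [InnerProductSpace ℝ E]
    [FiniteDimensional ℝ E] [MeasurableSpace E] [BorelSpace E]
    (β : ℝ × E → ℂ) (hβc : Continuous β) (hβs : HasCompactSupport β) (ω : E)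
    (h : ∀ φ : E → ℝ, ContDiff ℝ (⊤ : ℕ∞) φ → HasCompactSupport φ →
      (∫ z : ℝ × E, β z * ((φ (z.2 + z.1 • ω) : ℝ) : ℂ) ^ 2) = 0) :
    ∀ y : E, (∫ t : ℝ, β (t, y - t • ω)) = 0 := by
  intro y
  let e : (ℝ × E) ≃ₜ (ℝ × E) :=
    { toFun := fun z => (z.1, z.2 - z.1 • ω)
      invFun := fun z => (z.1, z.2 + z.1 • ω)
      left_inv := fun z => by simp
      right_inv := fun z => by simp
      continuous_toFun := by fun_prop
      continuous_invFun := by fun_prop }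
  let γ : ℝ × E → ℂ := fun z => β (z.1, z.2 - z.1 • ω)
  have hγc : Continuous γ := by fun_prop
  have hγs : HasCompactSupport γ := hβs.comp_homeomorph e
  let F : E → ℂ := fun y => ∫ t : ℝ, γ (t, y)
  have hFc : Continuous F := by
    have hK : IsCompact (Prod.fst '' tsupport β) := hβs.isCompact.image continuous_fst
    have : F = fun y => ∫ t in Prod.fst '' tsupport β, γ (t, y) := by
      funext y
      refine (setIntegral_eq_integral_of_forall_compl_eq_zero ?_).symm
      intro t ht
      by_contra hne
      exact ht ⟨_, subset_tsupport β hne, rfl⟩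
    rw [this]
    exact continuous_parametric_integral_of_continuous
      (f := fun y t => γ (t, y)) (by simp only [Function.uncurry_def]; fun_prop) hK
  have key : ∀ φ : E → ℝ, ContDiff ℝ (⊤ : ℕ∞) φ → HasCompactSupport φ →
      ∫ y, ((φ y : ℝ) : ℂ) ^ 2 * F y = 0 := by
    intro φ hφ hφs
    have hφc := hφ.continuous
    have h1 := h φ hφ hφs
    have hint : Integrable (fun z : ℝ × E => β z * ((φ (z.2 + z.1 • ω) : ℝ) : ℂ) ^ 2)
        (volume.prod volume) :=
      Continuous.integrable_of_hasCompactSupport (by fun_prop) hβs.mul_right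
    rw [Measure.volume_eq_prod, integral_prod _ hint] at h1
    have h2 : ∀ t : ℝ, ∫ x : E, β (t, x) * ((φ (x + t • ω) : ℝ) : ℂ) ^ 2
        = ∫ x : E, γ (t, x) * ((φ x : ℝ) : ℂ) ^ 2 := by
      intro t
      rw [← integral_sub_right_eq_self _ (t • ω)]
      simp [γ]
    simp only [h2] at h1
    have hs2 : HasCompactSupport
        (Function.uncurry (fun (t : ℝ) (x : E) => γ (t, x) * ((φ x : ℝ) : ℂ) ^ 2)) := by
      refine hγs.mono ?_
      rintro ⟨t, x⟩ hz h0
      exact hz (by simp only [Function.uncurry_apply_pair, h0, zero_mul])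
    rw [integral_integral_swap_of_hasCompactSupport (f := fun t x => γ (t, x) * ((φ x : ℝ) : ℂ) ^ 2)
      (by simp only [Function.uncurry_def]; fun_prop) hs2] at h1
    rw [← h1]
    congr 1
    funext x
    rw [integral_mul_const, mul_comm]
  have hint : ∀ φ : E → ℝ, ContDiff ℝ (⊤ : ℕ∞) φ → HasCompactSupport φ →
      Integrable (fun y => ((φ y : ℝ) : ℂ) ^ 2 * F y) := by
    intro φ hφ hφs
    have hφc := hφ.continuous
    refine Continuous.integrable_of_hasCompactSupport (by fun_prop) (HasCompactSupport.mul_right ?_)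
    exact hφs.comp_left (g := fun r : ℝ => (r : ℂ) ^ 2) (by simp)
  have hae : ∀ᵐ y : E, F y = 0 := by
    refine ae_eq_zero_of_integral_contDiff_smul_eq_zero hFc.locallyIntegrable ?_
    intro g hg hgs
    obtain ⟨r, hr, hball⟩ := hgs.isCompact.isBounded.subset_closedBall_lt 0 (0 : E)
    let c : ContDiffBump (0 : E) := ⟨r, r + 1, hr, by linarith⟩
    obtain ⟨ψ, hψc, hψ, hψ1⟩ : ∃ ψ : E → ℝ, HasCompactSupport ψ ∧
        ContDiff ℝ (⊤ : ℕ∞) ψ ∧ ∀ x ∈ tsupport g, ψ x = 1 :=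
      ⟨c, c.hasCompactSupport, c.contDiff, fun x hx => c.one_of_mem_closedBall (hball hx)⟩
    have hgψ : ∀ x, g x * ψ x = g x := by
      intro x
      by_cases hx : x ∈ tsupport g
      · rw [hψ1 x hx, mul_one]
      · rw [image_eq_zero_of_notMem_tsupport hx, zero_mul]
    have ha := (hg.add hψ)
    have has := hgs.add hψc
    have hb := (hg.sub hψ)
    have hbs : HasCompactSupport (fun x => g x - ψ x) := hgs.sub hψc
    have : ∀ x, g x • F x = (1 / 4 : ℂ) * ((((g x + ψ x : ℝ) : ℂ) ^ 2 * F x)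
        - (((g x - ψ x : ℝ) : ℂ) ^ 2 * F x)) := by
      intro x
      rw [Complex.real_smul]
      have : ((g x : ℝ) : ℂ) * ψ x = g x := by exact_mod_cast hgψ x
      push_cast
      linear_combination (-F x) * this
    simp only [this]
    rw [integral_const_mul, integral_sub (hint _ ha has) (hint _ hb hbs)]
    rw [key _ hb hbs]
    have := key _ ha has
    rw [this]; simp
  have h0 : F = fun _ => 0 := (hFc.ae_eq_iff_eq volume continuous_const).1 hae
  exact congrFun h0 y

/-- Let `β : ℝ^{1+n} → ℂ` be continuous with compact support and `ω` a unit
vector of `ℝⁿ`.  If `∫ β(t,x) φ(x + tω)² dx dt = 0` for every smooth compactly supported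
`φ : ℝⁿ → ℝ`, then the light ray transform `∫ β(t, y − tω) dt` vanishes for every `y`. -/
theorem statement6 (n : ℕ) (hn : 1 ≤ n)
    (β : ℝ × EuclideanSpace ℝ (Fin n) → ℂ)
    (hβc : Continuous β) (hβs : HasCompactSupport β)
    (ω : EuclideanSpace ℝ (Fin n)) (hω : ‖ω‖ = 1)
    (h : ∀ φ : EuclideanSpace ℝ (Fin n) → ℝ, ContDiff ℝ (⊤ : ℕ∞) φ → HasCompactSupport φ →
      (∫ z : ℝ × EuclideanSpace ℝ (Fin n),
        β z * ((φ (z.2 + z.1 • ω) : ℝ) : ℂ) ^ 2) = 0) :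
    ∀ y : EuclideanSpace ℝ (Fin n), (∫ t : ℝ, β (t, y - t • ω)) = 0 := by
  exact light_ray_aux β hβc hβs ω h
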